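/- Let k ≥ 1, m ≥ 2, let q : ℝ^{k+1}_+ → ℝ and φ : ℝ^m_+ → ℝ both satisfy the cost-function conditions, and define q̃(x,y) = q(x, φ(y)) for x ∈ ℝ^k_+, y ∈ ℝ^m_+. Then for all z ∈ ℂ^k and w = (w_1,…,w_m) ∈ ℂ^m with Re z ∈ ℝ^k_+ and Re w ∈ ℝ^m_+, writing s = w_1 + ⋯ + w_m, one has (M e^{−q̃})(z,w) = (M e^{−φ})(w) · (M e^{−q})(z,s) / Γ(s), where Γ is the Gamma function. -/

import Mathlib

open MeasureTheory Complex Set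

noncomputable section

/-- The positive orthant `ℝ^n_+`. -/
def posOrth (n : ℕ) : Set (Fin n → ℝ) := {x | ∀ i, 0 < x i}

/-- `q` satisfies the cost-function conditions: `C¹` on `ℝ^n_+`, positive,
positively homogeneous of degree one, with bounded level sets. -/
def IsCostFun (n : ℕ) (q : (Fin n → ℝ) → ℝ) : Prop :=
  ContDiffOn ℝ 1 q (posOrth n) ∧
  (∀ x ∈ posOrth n, 0 < q x) ∧
  (∀ lam : ℝ, 0 < lam → ∀ x ∈ posOrth n, q (fun i => lam * x i) = lam * q x) ∧
  (∀ t : ℝ, Bornology.IsBounded {x | x ∈ posOrth n ∧ q x = t})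

/-- The `n`-dimensional Mellin transform `(Mg)(z) = ∫_{ℝ^n_+} x^{z-I} g(x) dx`. -/
def mellinT (n : ℕ) (g : (Fin n → ℝ) → ℝ) (z : Fin n → ℂ) : ℂ :=
  ∫ x in posOrth n, (∏ i, (x i : ℂ) ^ (z i - 1)) * g x

/-- The composed cost function `q̃(x,y) = q(x, φ(y))` on `ℝ^{k+m}_+`. -/
def nestedCost (k m : ℕ) (q : (Fin (k + 1) → ℝ) → ℝ) (φ : (Fin m → ℝ) → ℝ)
    (v : Fin (k + m) → ℝ) : ℝ :=
  q (Fin.snoc (fun i => v (Fin.castAdd m i)) (φ (fun j => v (Fin.natAdd k j))))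


lemma measurableSet_posOrth (n : ℕ) : MeasurableSet (posOrth n) := by
  have : posOrth n = Set.univ.pi (fun _ => Ioi (0:ℝ)) := by ext x; simp [posOrth]
  rw [this]; exact MeasurableSet.univ_pi fun _ => measurableSet_Ioi

lemma IsCostFun.bound {n : ℕ} {q : (Fin n → ℝ) → ℝ} (hq : IsCostFun n q) :
    ∃ c > 0, ∀ x ∈ posOrth n, ∀ i, c * x i ≤ q x := by
  obtain ⟨-, hpos, hhom, hbd⟩ := hq
  obtain ⟨R, hR⟩ := (hbd 1).exists_norm_le
  refine ⟨(max R 1)⁻¹, by positivity, fun x hx i => ?_⟩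
  have hq0 := hpos x hx
  have hmem : (fun i => (q x)⁻¹ * x i) ∈ {x | x ∈ posOrth n ∧ q x = 1} := by
    refine ⟨fun i => mul_pos (inv_pos.2 hq0) (hx i), ?_⟩
    rw [hhom _ (inv_pos.2 hq0) x hx, inv_mul_cancel₀ hq0.ne']
  have h1 := (norm_le_pi_norm (fun i => (q x)⁻¹ * x i) i).trans (hR _ hmem)
  rw [Real.norm_of_nonneg (mul_pos (inv_pos.2 hq0) (hx i)).le] at h1
  have h2 := h1.trans (le_max_left R 1)
  rw [inv_mul_le_iff₀ hq0] at h2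
  rw [inv_mul_le_iff₀ (by positivity)]
  linarith

lemma contOn_cpow {X : Type*} [TopologicalSpace X] {s : Set X} {f : X → ℝ} (hf : ContinuousOn f s)
    (hp : ∀ x ∈ s, 0 < f x) (a : ℂ) : ContinuousOn (fun x => (f x : ℂ) ^ a) s := by
  refine ContinuousOn.cpow_const (continuous_ofReal.comp_continuousOn hf) fun x hx => ?_
  simp [slitPlane, hp x hx]

lemma int_one {a : ℂ} (ha : 0 < a.re) {c : ℝ} (hc : 0 < c) :
    IntegrableOn (fun t : ℝ => t ^ (a.re - 1) * Real.exp (-c * t)) (Ioi 0) := by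
  simpa using integrableOn_rpow_mul_exp_neg_mul_rpow (p := 1) (s := a.re - 1) (b := c)
    (by linarith) one_pos hc

lemma int_orth {n : ℕ} {G : (Fin n → ℝ) → ℝ} (hG : ContinuousOn G (posOrth n))
    {c : ℝ} (hc : 0 < c) (hb : ∀ x ∈ posOrth n, |G x| ≤ ∏ i, Real.exp (-c * x i))
    {z : Fin n → ℂ} (hz : ∀ i, 0 < (z i).re) :
    IntegrableOn (fun x => (∏ i, (x i : ℂ) ^ (z i - 1)) * G x) (posOrth n) := by
  have e : posOrth n = Set.univ.pi (fun _ => Ioi (0:ℝ)) := by ext x; simp [posOrth]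
  have hdom : IntegrableOn
      (fun x : Fin n → ℝ => ∏ i, ((x i) ^ ((z i).re - 1) * Real.exp (-c * x i))) (posOrth n) := by
    rw [IntegrableOn, e, volume_pi, Measure.restrict_pi_pi]
    exact Integrable.fintype_prod (fun i => int_one (hz i) hc)
  refine Integrable.mono' hdom ?_ ?_
  · refine ContinuousOn.aestronglyMeasurable ?_ (measurableSet_posOrth n)
    refine ContinuousOn.mul ?_ (continuous_ofReal.comp_continuousOn hG)
    exact continuousOn_finsetProd _ fun i _ =>
      contOn_cpow (s := posOrth n) (f := fun x => x i) (continuous_apply i).continuousOn (fun x hx => hx i) _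
  · filter_upwards [ae_restrict_mem (measurableSet_posOrth n)] with x hx
    rw [norm_mul, norm_prod, Finset.prod_mul_distrib, norm_real, Real.norm_eq_abs]
    have : ∏ i, ‖(x i : ℂ) ^ (z i - 1)‖ = ∏ i, (x i) ^ ((z i).re - 1) :=
      Finset.prod_congr rfl fun i _ => by
        rw [norm_cpow_eq_rpow_re_of_pos (hx i)]; simp
    rw [this]
    exact mul_le_mul_of_nonneg_left (hb x hx)
      (Finset.prod_nonneg fun i _ => (Real.rpow_pos_of_pos (hx i) _).le)

/-- min-type bounds give product-type bounds -/
lemma exp_bound {n : ℕ} {c : ℝ} {g : ℝ} {x : Fin n → ℝ} (hg : 0 ≤ g) (h : ∀ i, c * x i ≤ g) :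
    Real.exp (-g) ≤ ∏ i, Real.exp (-(c / (n + 1)) * x i) := by
  rw [← Real.exp_sum, Real.exp_le_exp, ← Finset.mul_sum]
  have : ∑ i, c * x i ≤ ∑ _i : Fin n, g := Finset.sum_le_sum fun i _ => h i
  rw [← Finset.mul_sum] at this
  simp at this
  have hn : (0:ℝ) < n + 1 := by positivity
  have h2 : c / (n+1) * ∑ i, x i ≤ g := by
    rw [div_mul_eq_mul_div, div_le_iff₀ hn]; nlinarith
  linarith

def GoodF (F : ℝ → ℝ) : Prop := ContinuousOn F (Ioi 0) ∧ ∃ c > 0, ∀ t > 0, |F t| ≤ Real.exp (-c * t)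

lemma GoodF.conv {F : ℝ → ℝ} (hF : GoodF F) {s : ℂ} (hs : 0 < s.re) :
    MellinConvergent (fun t => (F t : ℂ)) s := by
  obtain ⟨h1, c, hc, h2⟩ := hF
  refine Integrable.mono' (int_one hs hc) ?_ ?_
  · refine ContinuousOn.aestronglyMeasurable ?_ measurableSet_Ioi
    exact (contOn_cpow continuousOn_id (fun x hx => hx) _).smul (continuous_ofReal.comp_continuousOn h1)
  · filter_upwards [ae_restrict_mem measurableSet_Ioi] with x hx
    rw [norm_smul, norm_cpow_eq_rpow_re_of_pos hx, norm_real, Real.norm_eq_abs]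
    simp only [sub_re, one_re]
    exact mul_le_mul_of_nonneg_left (h2 x hx) (Real.rpow_pos_of_pos hx _).le

lemma GoodF.abs {F : ℝ → ℝ} (hF : GoodF F) : GoodF (fun t => |F t|) := by
  obtain ⟨h1, c, hc, h2⟩ := hF
  exact ⟨h1.abs, c, hc, by simpa using h2⟩

lemma goodExp : GoodF (fun t => Real.exp (-t)) :=
  ⟨by fun_prop, 1, one_pos, fun t _ => by simp⟩

def K1 (F : ℝ → ℝ) (s : ℂ) (t b : ℝ) : ℂ := (b : ℂ) ^ s * ((t : ℂ) ^ (s - 1) * (F (b * t) : ℂ))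
def K2 (F : ℝ → ℝ) (s : ℂ) (t b : ℝ) : ℂ := (b : ℂ) ^ s * ((t : ℂ) ^ (-s - 1) * (F (b * t⁻¹) : ℂ))

lemma K1_int {F : ℝ → ℝ} (hF : GoodF F) {s : ℂ} (hs : 0 < s.re) {b : ℝ} (hb : 0 < b) :
    IntegrableOn (fun t => K1 F s t b) (Ioi 0) :=
  Integrable.const_mul ((MellinConvergent.comp_mul_left (f := fun t => (F t : ℂ)) hb).2 (hF.conv hs)) _

lemma K1_val (F : ℝ → ℝ) (s : ℂ) {b : ℝ} (hb : 0 < b) :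
    ∫ t in Ioi 0, K1 F s t b = mellin (fun t => (F t : ℂ)) s := by
  have := mellin_comp_mul_left (fun t => (F t : ℂ)) s hb
  simp only [K1]
  rw [integral_const_mul]
  have e : ∫ t in Ioi (0:ℝ), ((t : ℂ) ^ (s - 1) * (F (b * t) : ℂ)) = mellin (fun t => (F (b * t) : ℂ)) s := rfl
  rw [e, this, smul_eq_mul, ← mul_assoc, ← cpow_add _ _ (by exact_mod_cast hb.ne')]
  simp

lemma K2_int {F : ℝ → ℝ} (hF : GoodF F) {s : ℂ} (hs : 0 < s.re) {b : ℝ} (hb : 0 < b) :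
    IntegrableOn (fun t => K2 F s t b) (Ioi 0) := by
  refine Integrable.const_mul (c := (b:ℂ)^s)
    (f := fun t : ℝ => (t : ℂ) ^ (-s - 1) * (F (b * t⁻¹) : ℂ)) ?_
  have h := (MellinConvergent.comp_mul_left (f := fun t => (F t : ℂ)) hb).2 (hF.conv hs)
  have h2 := (MellinConvergent.comp_rpow (f := fun t => (F (b * t) : ℂ)) (s := -s) (a := -1) (by norm_num)).2
    (by simpa using h)
  have h3 : IntegrableOn (fun t : ℝ => (t : ℂ) ^ (-s - 1) * (F (b * t⁻¹) : ℂ)) (Ioi 0) := by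
    simpa [MellinConvergent, Real.rpow_neg_one] using h2
  exact h3

lemma K2_val (F : ℝ → ℝ) (s : ℂ) {b : ℝ} (hb : 0 < b) :
    ∫ t in Ioi 0, K2 F s t b = mellin (fun t => (F t : ℂ)) s := by
  have := mellin_comp_mul_left (fun t => (F t : ℂ)) s hb
  have h3 := mellin_comp_inv (fun t => (F (b * t) : ℂ)) (-s)
  simp only [K2]
  rw [integral_const_mul]
  have e : ∫ t in Ioi (0:ℝ), ((t : ℂ) ^ (-s - 1) * (F (b * t⁻¹) : ℂ)) =
    mellin (fun t => (F (b * t⁻¹) : ℂ)) (-s) := rfl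
  rw [e, h3, neg_neg, this, smul_eq_mul, ← mul_assoc, ← cpow_add _ _ (by exact_mod_cast hb.ne')]
  simp

lemma K1_norm (F : ℝ → ℝ) (s : ℂ) {b t : ℝ} (hb : 0 < b) (ht : 0 < t) :
    ((‖K1 F s t b‖ : ℝ) : ℂ) = K1 (fun t => |F t|) (s.re : ℂ) t b := by
  have : (s.re : ℂ) - 1 = ((s.re - 1 : ℝ) : ℂ) := by push_cast; rfl
  rw [K1, K1, norm_mul, norm_mul, norm_cpow_eq_rpow_re_of_pos hb, norm_cpow_eq_rpow_re_of_pos ht, this,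
    ← ofReal_cpow hb.le, ← ofReal_cpow ht.le, norm_real, Real.norm_eq_abs]
  simp

lemma K2_norm (F : ℝ → ℝ) (s : ℂ) {b t : ℝ} (hb : 0 < b) (ht : 0 < t) :
    ((‖K2 F s t b‖ : ℝ) : ℂ) = K2 (fun t => |F t|) (s.re : ℂ) t b := by
  have : -(s.re : ℂ) - 1 = ((-s.re - 1 : ℝ) : ℂ) := by push_cast; rfl
  rw [K2, K2, norm_mul, norm_mul, norm_cpow_eq_rpow_re_of_pos hb, norm_cpow_eq_rpow_re_of_pos ht, this,
    ← ofReal_cpow hb.le, ← ofReal_cpow ht.le, norm_real, Real.norm_eq_abs]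
  simp

lemma K1_nval (F : ℝ → ℝ) (s : ℂ) {b : ℝ} (hb : 0 < b) :
    ∫ t in Ioi 0, ‖K1 F s t b‖ = (mellin (fun t => ((|F t| : ℝ) : ℂ)) s.re).re := by
  have := K1_val (fun t => |F t|) s.re hb
  rw [← this, ← setIntegral_congr_fun measurableSet_Ioi (fun t ht => K1_norm F s hb ht)]
  have e := integral_ofReal (𝕜 := ℂ) (μ := volume.restrict (Ioi (0:ℝ))) (f := fun t => ‖K1 F s t b‖)
  exact (congrArg Complex.re e).symm

lemma K2_nval (F : ℝ → ℝ) (s : ℂ) {b : ℝ} (hb : 0 < b) :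
    ∫ t in Ioi 0, ‖K2 F s t b‖ = (mellin (fun t => ((|F t| : ℝ) : ℂ)) s.re).re := by
  have := K2_val (fun t => |F t|) s.re hb
  rw [← this, ← setIntegral_congr_fun measurableSet_Ioi (fun t ht => K2_norm F s hb ht)]
  have e := integral_ofReal (𝕜 := ℂ) (μ := volume.restrict (Ioi (0:ℝ))) (f := fun t => ‖K2 F s t b‖)
  exact (congrArg Complex.re e).symm

lemma K1_cont {F : ℝ → ℝ} (hF : GoodF F) (s : ℂ) :
    ContinuousOn (fun p : ℝ × ℝ => K1 F s p.1 p.2) (Ioi 0 ×ˢ Ioi 0) := by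
  unfold K1
  refine (contOn_cpow continuousOn_snd (fun p hp => hp.2) _).mul
    ((contOn_cpow continuousOn_fst (fun p hp => hp.1) _).mul ?_)
  refine continuous_ofReal.comp_continuousOn (hF.1.comp (by fun_prop) fun p hp => ?_)
  exact mul_pos (mem_Ioi.1 hp.2) (mem_Ioi.1 hp.1)

lemma K2_cont {F : ℝ → ℝ} (hF : GoodF F) (s : ℂ) :
    ContinuousOn (fun p : ℝ × ℝ => K2 F s p.1 p.2) (Ioi 0 ×ˢ Ioi 0) := by
  unfold K2
  refine (contOn_cpow continuousOn_snd (fun p hp => hp.2) _).mul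
    ((contOn_cpow continuousOn_fst (fun p hp => hp.1) _).mul ?_)
  refine continuous_ofReal.comp_continuousOn (hF.1.comp ?_ fun p hp => ?_)
  · exact continuousOn_snd.mul (continuousOn_fst.inv₀ fun p hp => (ne_of_gt hp.1))
  exact mul_pos (mem_Ioi.1 hp.2) (inv_pos.2 (mem_Ioi.1 hp.1))

lemma swap_lemma {m : ℕ} {φ : (Fin m → ℝ) → ℝ} (hφ : ContinuousOn φ (posOrth m))
    (hpos : ∀ y ∈ posOrth m, 0 < φ y) {A : (Fin m → ℝ) → ℂ} (hA : IntegrableOn A (posOrth m))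
    {K : ℝ → ℝ → ℂ} (hK : ContinuousOn (fun p : ℝ × ℝ => K p.1 p.2) (Ioi 0 ×ˢ Ioi 0))
    (hKi : ∀ b > 0, IntegrableOn (fun t => K t b) (Ioi 0)) {C : ℝ} {C' : ℂ}
    (hC : ∀ b > 0, ∫ t in Ioi 0, ‖K t b‖ = C) (hC' : ∀ b > 0, ∫ t in Ioi 0, K t b = C') :
    ∫ t in Ioi 0, ∫ y in posOrth m, A y * K t (φ y) = (∫ y in posOrth m, A y) * C' := by
  have hmeas := measurableSet_posOrth m
  rw [integral_integral_swap]
  · rw [← integral_mul_const]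
    refine setIntegral_congr_fun hmeas fun y hy => ?_
    rw [integral_const_mul, hC' _ (hpos y hy)]
  · have hm : AEStronglyMeasurable (Function.uncurry fun (t : ℝ) (y : Fin m → ℝ) => A y * K t (φ y))
        ((volume.restrict (Ioi (0:ℝ))).prod (volume.restrict (posOrth m))) := by
      refine AEStronglyMeasurable.mul (hA.aestronglyMeasurable.comp_snd) ?_
      rw [Measure.prod_restrict]
      refine ContinuousOn.aestronglyMeasurable ?_ (measurableSet_Ioi.prod hmeas)
      refine hK.comp (f := fun p : ℝ × (Fin m → ℝ) => (p.1, φ p.2)) ?_ ?_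
      · exact continuousOn_fst.prodMk (hφ.comp continuousOn_snd fun p hp => hp.2)
      · exact fun p hp => ⟨hp.1, hpos _ hp.2⟩
    rw [integrable_prod_iff' hm]
    constructor
    · filter_upwards [ae_restrict_mem hmeas] with y hy
      exact (hKi _ (hpos y hy)).const_mul (A y)
    · refine Integrable.congr (hA.norm.mul_const C) ?_
      filter_upwards [ae_restrict_mem hmeas] with y hy
      simp only [Function.uncurry, norm_mul]
      rw [integral_const_mul, hC _ (hpos y hy)]

lemma my_cpow_sum {ι : Type*} (S : Finset ι) (f : ι → ℂ) {t : ℂ} (ht : t ≠ 0) :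
    ∏ i ∈ S, t ^ f i = t ^ (∑ i ∈ S, f i) := by
  classical
  induction S using Finset.induction_on with
  | empty => simp
  | insert a S ha ih => rw [Finset.prod_insert ha, Finset.sum_insert ha, ih, cpow_add _ _ ht]

lemma scale_pt {m : ℕ} {φ : (Fin m → ℝ) → ℝ} (hφ : IsCostFun m φ) (F : ℝ → ℝ) (w : Fin m → ℂ)
    {t : ℝ} (ht : 0 < t) {u : Fin m → ℝ} (hu : u ∈ posOrth m) :
    (((t⁻¹) ^ m : ℝ) : ℂ) * (((∏ i, (((t⁻¹ • u) i : ℝ) : ℂ) ^ (w i - 1)) * (F (φ (t⁻¹ • u)) : ℂ)) *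
      K1 (fun t => Real.exp (-t)) (∑ j, w j) t (φ (t⁻¹ • u))) =
    ((∏ i, (u i : ℂ) ^ (w i - 1)) * (Real.exp (-φ u) : ℂ)) * K2 F (∑ j, w j) t (φ u) := by
  have ht' := inv_pos.2 ht
  have hh : φ (t⁻¹ • u) = φ u * t⁻¹ := by
    rw [mul_comm]; exact hφ.2.2.1 _ ht' u hu
  have hφu := hφ.2.1 u hu
  rw [hh, K1, K2]
  have h1 : φ u * t⁻¹ * t = φ u := by field_simp
  have ht0 : (t : ℂ) ≠ 0 := by exact_mod_cast ht.ne'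
  have hti0 : ((t⁻¹ : ℝ) : ℂ) ≠ 0 := by exact_mod_cast ht'.ne'
  have hinv : ∀ a : ℂ, ((t⁻¹ : ℝ) : ℂ) ^ a = (t : ℂ) ^ (-a) := fun a => by
    rw [ofReal_inv, inv_cpow _ _ (by rw [arg_ofReal_of_nonneg ht.le]; exact Real.pi_pos.ne), cpow_neg]
  have hprod : ∏ i, (((t⁻¹ • u) i : ℝ) : ℂ) ^ (w i - 1) =
      (t : ℂ) ^ (-(∑ j, w j) + m) * ∏ i, (u i : ℂ) ^ (w i - 1) := by
    have : ∀ i, (((t⁻¹ • u) i : ℝ) : ℂ) ^ (w i - 1) =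
        (t : ℂ) ^ (-(w i - 1)) * (u i : ℂ) ^ (w i - 1) := fun i => by
      rw [← hinv, Pi.smul_apply, smul_eq_mul, ofReal_mul,
        mul_cpow_ofReal_nonneg ht'.le (hu i).le]
    rw [Finset.prod_congr rfl fun i _ => this i, Finset.prod_mul_distrib, my_cpow_sum _ _ ht0]
    congr 2
    simp [Finset.sum_neg_distrib]
    ring
  have hpow : (((t⁻¹) ^ m : ℝ) : ℂ) = (t : ℂ) ^ (-(m : ℂ)) := by
    rw [← hinv, cpow_natCast, ofReal_pow]
  rw [h1, hprod, hpow, ofReal_mul, mul_cpow_ofReal_nonneg hφu.le ht'.le, hinv]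
  have key : (t : ℂ) ^ (-(m : ℂ)) * (t : ℂ) ^ (-(∑ j, w j) + m) * (t : ℂ) ^ (-(∑ j, w j)) *
      (t : ℂ) ^ ((∑ j, w j) - 1) = (t : ℂ) ^ (-(∑ j, w j) - 1) := by
    rw [← cpow_add _ _ ht0, ← cpow_add _ _ ht0, ← cpow_add _ _ ht0]
    congr 1; ring
  rw [← key]
  ring

lemma smul_posOrth {m : ℕ} {r : ℝ} (hr : 0 < r) :
    (fun x : Fin m → ℝ => r • x) '' posOrth m = posOrth m := by
  ext x
  constructor
  · rintro ⟨y, hy, rfl⟩ i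
    exact mul_pos hr (hy i)
  · intro hx
    refine ⟨r⁻¹ • x, fun i => mul_pos (inv_pos.2 hr) (hx i), ?_⟩
    simp [smul_smul, hr.ne']

open scoped Pointwise in
lemma main1 {m : ℕ} (hm : 2 ≤ m) {φ : (Fin m → ℝ) → ℝ} (hφ : IsCostFun m φ) {F : ℝ → ℝ}
    (hF : GoodF F) {w : Fin m → ℂ} (hw : ∀ j, 0 < (w j).re) :
    (∫ y in posOrth m, (∏ i, (y i : ℂ) ^ (w i - 1)) * (F (φ y) : ℂ)) * Complex.Gamma (∑ j, w j) =
      mellinT m (fun y => Real.exp (-φ y)) w * mellin (fun t => (F t : ℂ)) (∑ j, w j) := by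
  have hs : 0 < (∑ j, w j).re := by
    rw [re_sum]
    exact Finset.sum_pos (fun j _ => hw j) ⟨⟨0, by omega⟩, Finset.mem_univ _⟩
  have hcont := hφ.1.continuousOn
  obtain ⟨c, hc, hb⟩ := hφ.bound
  have hG : mellin (fun t : ℝ => ((Real.exp (-t) : ℝ) : ℂ)) (∑ j, w j) = Complex.Gamma (∑ j, w j) := by
    rw [Complex.Gamma_eq_integral hs, Complex.GammaIntegral_eq_mellin]
  have hint : ∀ F : ℝ → ℝ, GoodF F →
      IntegrableOn (fun y => (∏ i, (y i : ℂ) ^ (w i - 1)) * (F (φ y) : ℂ)) (posOrth m) := by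
    rintro F ⟨hF1, d, hd, hF2⟩
    refine int_orth (G := fun y => F (φ y)) (c := d * c / (m + 1)) (hF1.comp hcont fun y hy => hφ.2.1 y hy)
      (by positivity) (fun y hy => ?_) hw
    refine (hF2 _ (hφ.2.1 y hy)).trans ?_
    rw [neg_mul]
    refine exp_bound (mul_pos hd (hφ.2.1 y hy)).le fun i => ?_
    rw [mul_assoc]
    exact mul_le_mul_of_nonneg_left (hb y hy i) hd.le
  have h1 := swap_lemma hcont hφ.2.1 (hint F hF) (K1_cont goodExp (∑ j, w j))
    (fun b hb => K1_int goodExp hs hb) (fun b hb => K1_nval _ _ hb) (fun b hb => K1_val _ _ hb)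
  have h2 := swap_lemma hcont hφ.2.1 (hint _ goodExp) (K2_cont hF (∑ j, w j))
    (fun b hb => K2_int hF hs hb) (fun b hb => K2_nval _ _ hb) (fun b hb => K2_val _ _ hb)
  rw [hG] at h1
  rw [mellinT, ← h1, ← h2]
  refine setIntegral_congr_fun measurableSet_Ioi fun t ht => ?_
  have ht' : 0 < t⁻¹ := inv_pos.2 ht
  have h3 := Measure.setIntegral_comp_smul_of_pos volume (fun y : Fin m → ℝ =>
    ((∏ i, (y i : ℂ) ^ (w i - 1)) * (F (φ y) : ℂ)) *
      K1 (fun t => Real.exp (-t)) (∑ j, w j) t (φ y)) (posOrth m) ht'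
  have e : t⁻¹ • posOrth m = posOrth m := smul_posOrth ht'
  rw [e, Module.finrank_fintype_fun_eq_card, Fintype.card_fin] at h3
  rw [← setIntegral_congr_fun (measurableSet_posOrth m) (fun u hu => scale_pt hφ F w ht hu),
    integral_const_mul, h3, real_smul, ← mul_assoc, ← ofReal_mul, mul_inv_cancel₀ (by positivity)]
  simp

def appE (k m : ℕ) : ((Fin k → ℝ) × (Fin m → ℝ)) ≃ᵐ (Fin (k + m) → ℝ) :=
  (MeasurableEquiv.sumPiEquivProdPi (fun _ : Fin k ⊕ Fin m => ℝ)).symm.trans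
    (MeasurableEquiv.piCongrLeft (fun _ => ℝ) finSumFinEquiv)

lemma appE_apply (k m : ℕ) (p : (Fin k → ℝ) × (Fin m → ℝ)) :
    appE k m p = Fin.append p.1 p.2 := by
  ext i
  obtain ⟨j, rfl⟩ := finSumFinEquiv.surjective i
  rw [appE, MeasurableEquiv.trans_apply, MeasurableEquiv.piCongrLeft_apply_apply]
  cases j <;> simp [MeasurableEquiv.coe_sumPiEquivProdPi_symm]

lemma appE_mp (k m : ℕ) : MeasurePreserving (appE k m) volume volume :=
  (volume_measurePreserving_piCongrLeft (fun _ => ℝ) finSumFinEquiv).comp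
    (volume_measurePreserving_sumPiEquivProdPi_symm (fun _ : Fin k ⊕ Fin m => ℝ))

lemma split_app (k m : ℕ) {g : (Fin (k + m) → ℝ) → ℂ} (hg : IntegrableOn g (posOrth (k + m))) :
    ∫ v in posOrth (k + m), g v = ∫ x in posOrth k, ∫ y in posOrth m, g (Fin.append x y) := by
  have hpre : appE k m ⁻¹' posOrth (k + m) = posOrth k ×ˢ posOrth m := by
    ext p
    simp only [mem_preimage, appE_apply, posOrth, mem_ofPred_eq, mem_prod, Fin.forall_fin_add,
      Fin.append_left, Fin.append_right]
  have h1 := (appE_mp k m).setIntegral_preimage_emb (appE k m).measurableEmbedding g (posOrth (k + m))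
  have h2 := ((appE_mp k m).integrableOn_comp_preimage (appE k m).measurableEmbedding).2 hg
  rw [hpre] at h1 h2
  rw [← h1]
  rw [Measure.volume_eq_prod] at h2 ⊢
  refine (setIntegral_prod _ h2).trans ?_
  simp only [Function.comp_apply, appE_apply]

lemma split_snoc (k : ℕ) {g : (Fin (k + 1) → ℝ) → ℂ} (hg : IntegrableOn g (posOrth (k + 1))) :
    ∫ v in posOrth (k + 1), g v =
      ∫ x in posOrth k, ∫ t in Ioi (0:ℝ), g (Fin.snoc (α := fun _ => ℝ) x t) := by
  rw [split_app k 1 hg]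
  refine setIntegral_congr_fun (measurableSet_posOrth k) fun x _ => ?_
  have hmp := volume_preserving_funUnique (Fin 1) ℝ
  have h1 := hmp.setIntegral_preimage_emb (MeasurableEquiv.funUnique (Fin 1) ℝ).measurableEmbedding
    (fun t => g (Fin.snoc (α := fun _ => ℝ) x t)) (Ioi 0)
  rw [← h1]
  have : (MeasurableEquiv.funUnique (Fin 1) ℝ) ⁻¹' Ioi 0 = posOrth 1 := by
    ext p; simp [posOrth, Fin.forall_fin_one]
  rw [this]
  refine setIntegral_congr_fun (measurableSet_posOrth 1) fun y _ => ?_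
  rw [Fin.append_right_eq_snoc]
  rfl

lemma snoc_mem {k : ℕ} {x : Fin k → ℝ} (hx : x ∈ posOrth k) {t : ℝ} (ht : 0 < t) :
    (Fin.snoc (α := fun _ => ℝ) x t : Fin (k + 1) → ℝ) ∈ posOrth (k + 1) := by
  intro i
  refine Fin.lastCases ?_ (fun j => ?_) i
  · simpa using ht
  · simpa using hx j

lemma main2 (k m : ℕ) (hm : 2 ≤ m)
    (q : (Fin (k + 1) → ℝ) → ℝ) (hq : IsCostFun (k + 1) q)
    (φ : (Fin m → ℝ) → ℝ) (hφ : IsCostFun m φ) (z : Fin k → ℂ) (w : Fin m → ℂ)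
    (hz : ∀ i, 0 < (z i).re) (hw : ∀ j, 0 < (w j).re) :
      mellinT (k + m) (fun v => Real.exp (-nestedCost k m q φ v)) (Fin.append z w) *
          Complex.Gamma (∑ j, w j) =
        mellinT m (fun y => Real.exp (-φ y)) w *
          mellinT (k + 1) (fun u => Real.exp (-q u)) (Fin.snoc z (∑ j, w j)) := by
  have hs : 0 < (∑ j, w j).re := by
    rw [re_sum]
    exact Finset.sum_pos (fun j _ => hw j) ⟨⟨0, by omega⟩, Finset.mem_univ _⟩
  obtain ⟨c, hc, hcb⟩ := hq.bound
  obtain ⟨d, hd, hdb⟩ := hφ.bound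
  have hqc := hq.1.continuousOn
  have hφc := hφ.1.continuousOn
  have i1 : IntegrableOn (fun u => (∏ i, (u i : ℂ) ^ ((Fin.snoc z (∑ j, w j) : Fin (k+1) → ℂ) i - 1)) *
      ((Real.exp (-q u) : ℝ) : ℂ)) (posOrth (k + 1)) := by
    refine int_orth (G := fun u => Real.exp (-q u)) (c := c / ((k + 1 : ℕ) + 1)) (hqc.neg.rexp)
      (by positivity) (fun u hu => ?_) ?_
    · rw [abs_of_pos (Real.exp_pos _)]
      exact exp_bound (hq.2.1 u hu).le (hcb u hu)
    · intro i
      refine Fin.lastCases ?_ (fun j => ?_) i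
      · simpa using hs
      · simpa using hz j
  have hmem1 : ∀ v ∈ posOrth (k + m), (fun i => v (Fin.castAdd m i)) ∈ posOrth k :=
    fun v hv i => hv _
  have hmem2 : ∀ v ∈ posOrth (k + m), (fun j => v (Fin.natAdd k j)) ∈ posOrth m :=
    fun v hv i => hv _
  have i2 : IntegrableOn (fun v => (∏ i, (v i : ℂ) ^ (Fin.append z w i - 1)) *
      ((Real.exp (-nestedCost k m q φ v) : ℝ) : ℂ)) (posOrth (k + m)) := by
    refine int_orth (G := fun v => Real.exp (-nestedCost k m q φ v))
      (c := (c * min 1 d) / ((k + m : ℕ) + 1)) ?_ (by positivity) (fun v hv => ?_) ?_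
    · refine ContinuousOn.rexp (ContinuousOn.neg ?_)
      unfold nestedCost
      refine hqc.comp (f := fun v : Fin (k + m) → ℝ => (Fin.snoc (α := fun _ => ℝ) (fun i => v (Fin.castAdd m i))
        (φ (fun j => v (Fin.natAdd k j))) : Fin (k + 1) → ℝ)) ?_ ?_
      · refine continuousOn_pi.2 fun i => ?_
        refine Fin.lastCases ?_ (fun j => ?_) i
        · simp only [Fin.snoc_last]
          exact hφc.comp (f := fun v : Fin (k + m) → ℝ => fun j => v (Fin.natAdd k j))
            (by fun_prop) hmem2
        · simp only [Fin.snoc_castSucc]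
          fun_prop
      · exact fun v hv => snoc_mem (hmem1 v hv) (hφ.2.1 _ (hmem2 v hv))
    · have hp := hφ.2.1 _ (hmem2 v hv)
      have hmm := snoc_mem (hmem1 v hv) hp
      have hcc := hcb _ hmm
      rw [abs_of_pos (Real.exp_pos _)]
      refine exp_bound (hq.2.1 _ hmm).le fun i => ?_
      refine Fin.addCases (fun i => ?_) (fun j => ?_) i
      · have := hcc (Fin.castSucc i)
        rw [Fin.snoc_castSucc] at this
        refine le_trans ?_ this
        have h0 := hv (Fin.castAdd m i)
        refine mul_le_mul_of_nonneg_right ?_ h0.le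
        nlinarith [min_le_left 1 d]
      · have := hcc (Fin.last k)
        rw [Fin.snoc_last] at this
        refine le_trans ?_ this
        have h0 := hv (Fin.natAdd k j)
        rw [mul_assoc]
        refine mul_le_mul_of_nonneg_left ?_ hc.le
        refine le_trans ?_ (hdb _ (hmem2 v hv) j)
        exact mul_le_mul_of_nonneg_right (min_le_right 1 d) h0.le
    · intro i
      refine Fin.addCases (fun i => ?_) (fun j => ?_) i
      · simpa using hz i
      · simpa using hw j
  have e1 := split_snoc k i1
  have e2 := split_app k m i2
  rw [mellinT, e2]
  conv_rhs => rw [mul_comm, mellinT]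
  rw [e1, ← integral_mul_const, ← integral_mul_const]
  refine setIntegral_congr_fun (measurableSet_posOrth k) fun x hx => ?_
  have hF : GoodF (fun t => Real.exp (-q (Fin.snoc (α := fun _ => ℝ) x t))) := by
    refine ⟨ContinuousOn.rexp (ContinuousOn.neg ?_), c, hc, fun t ht => ?_⟩
    · refine hqc.comp (f := fun t : ℝ => (Fin.snoc (α := fun _ => ℝ) x t : Fin (k + 1) → ℝ)) ?_
        (fun t ht => snoc_mem hx ht)
      refine continuousOn_pi.2 fun i => ?_
      refine Fin.lastCases ?_ (fun j => ?_) i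
      · simp only [Fin.snoc_last]
        exact continuousOn_id
      · simp only [Fin.snoc_castSucc]
        exact continuousOn_const
    · rw [abs_of_pos (Real.exp_pos _), Real.exp_le_exp]
      have := hcb _ (snoc_mem hx ht) (Fin.last k)
      rw [Fin.snoc_last] at this
      linarith
  have key := main1 hm hφ hF hw
  have l1 : ∀ y : Fin m → ℝ, (∏ i, ((Fin.append x y i : ℝ) : ℂ) ^ (Fin.append z w i - 1)) *
      ((Real.exp (-nestedCost k m q φ (Fin.append x y)) : ℝ) : ℂ) =
      (∏ i, (x i : ℂ) ^ (z i - 1)) * ((∏ i, (y i : ℂ) ^ (w i - 1)) *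
        ((Real.exp (-q (Fin.snoc (α := fun _ => ℝ) x (φ y))) : ℝ) : ℂ)) := fun y => by
    rw [Fin.prod_univ_add]
    simp only [Fin.append_left, Fin.append_right, nestedCost]
    ring
  have l2 : ∀ t : ℝ, (∏ i, (((Fin.snoc (α := fun _ => ℝ) x t : Fin (k + 1) → ℝ) i : ℝ) : ℂ) ^
      ((Fin.snoc z (∑ j, w j) : Fin (k + 1) → ℂ) i - 1)) *
      ((Real.exp (-q (Fin.snoc (α := fun _ => ℝ) x t)) : ℝ) : ℂ) =
      (∏ i, (x i : ℂ) ^ (z i - 1)) * ((t : ℂ) ^ ((∑ j, w j) - 1) •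
        ((Real.exp (-q (Fin.snoc (α := fun _ => ℝ) x t)) : ℝ) : ℂ)) := fun t => by
    rw [Fin.prod_univ_castSucc]
    simp only [Fin.snoc_castSucc, Fin.snoc_last, smul_eq_mul]
    ring
  simp only [l1, l2]
  rw [integral_const_mul, integral_const_mul, mul_assoc, key, mellin]
  ring

/-- Mellin transform of `e^{-q̃}` for the composed cost function `q̃(x,y) = q(x,φ(y))`:
for `Re z ∈ ℝ^k_+`, `Re w ∈ ℝ^m_+` and `s = w₁ + ⋯ + w_m`,
`(M e^{-q̃})(z,w) = (M e^{-φ})(w) (M e^{-q})(z,s) / Γ(s)`. -/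
theorem mellin_nestedCost_eq
    (k m : ℕ) (hk : 1 ≤ k) (hm : 2 ≤ m)
    (q : (Fin (k + 1) → ℝ) → ℝ) (hq : IsCostFun (k + 1) q)
    (φ : (Fin m → ℝ) → ℝ) (hφ : IsCostFun m φ) :
    ∀ (z : Fin k → ℂ) (w : Fin m → ℂ),
      (∀ i, 0 < (z i).re) → (∀ j, 0 < (w j).re) →
      mellinT (k + m) (fun v => Real.exp (-nestedCost k m q φ v)) (Fin.append z w) =
        mellinT m (fun y => Real.exp (-φ y)) w *
          mellinT (k + 1) (fun u => Real.exp (-q u)) (Fin.snoc z (∑ j, w j)) /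
          Complex.Gamma (∑ j, w j) := by
  intro z w hz hw
  have hs : 0 < (∑ j, w j).re := by
    rw [re_sum]
    exact Finset.sum_pos (fun j _ => hw j) ⟨⟨0, by omega⟩, Finset.mem_univ _⟩
  rw [eq_div_iff (Complex.Gamma_ne_zero_of_re_pos hs)]
  exact main2 k m hm q hq φ hφ z w hz hw
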